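/- Define ρ_N(p) = 1 − (1−p)^N, P↓↓_N(p) = N p² (1−p)^{N−1} / (1 − (1−p)^N)², P↕_N(p) = p² (1 − (1−p)^{2N}) / ((1 − (1−p)^N)² (1 − (1−p)²)), and λ_N(p) = (P↕_N(p) + (1 − ρ_N(p))·P↓↓_N(p)) / (2 − ρ_N(p)). For all integers N_2, N_3 with 2 ≤ N_2 < N_3 ≤ 30 and all real p with 0 < p < 1: (1 − λ_{N_3}(p))·ρ_{N_3}(p)·N_2 − λ_{N_2}(ρ_{N_3}(p))·ρ_{N_2·N_3}(p) < (1 − λ_{N_2}(p))·ρ_{N_2}(p)·N_3 − λ_{N_3}(ρ_{N_2}(p))·ρ_{N_2·N_3}(p). (Here one uses the identity ρ_{N_2}(ρ_{N_3}(p)) = ρ_{N_2·N_3}(p).) -/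

import Mathlib

/-- `ρ_N(p) = 1 − (1−p)^N`. -/
noncomputable def rho (N : ℕ) (p : ℝ) : ℝ := 1 - (1 - p) ^ N

/-- `P↓↓_N(p) = N p² (1−p)^{N−1} / (1 − (1−p)^N)²`. -/
noncomputable def Pdd (N : ℕ) (p : ℝ) : ℝ :=
  (N : ℝ) * p ^ 2 * (1 - p) ^ (N - 1) / (1 - (1 - p) ^ N) ^ 2

/-- `P↕_N(p) = p² (1 − (1−p)^{2N}) / ((1 − (1−p)^N)² (1 − (1−p)²))`. -/
noncomputable def Pud (N : ℕ) (p : ℝ) : ℝ :=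
  p ^ 2 * (1 - (1 - p) ^ (2 * N)) / ((1 - (1 - p) ^ N) ^ 2 * (1 - (1 - p) ^ 2))

/-- `λ_N(p) = (P↕_N(p) + (1 − ρ_N(p))·P↓↓_N(p)) / (2 − ρ_N(p))`. -/
noncomputable def lam (N : ℕ) (p : ℝ) : ℝ :=
  (Pud N p + (1 - rho N p) * Pdd N p) / (2 - rho N p)

open Set Real

lemma texp (n : ℕ) : ∀ v : ℝ, 0 ≤ v →
    0 ≤ (-1 : ℝ) ^ n * (Real.exp (-v) - ∑ k ∈ Finset.range n, (-v) ^ k / (k.factorial : ℝ)) := by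
  induction n with
  | zero => intro v hv; simp; positivity
  | succ n ih =>
    intro v hv
    have hd : ∀ u : ℝ, HasDerivAt (fun u : ℝ => (-1 : ℝ) ^ (n + 1) * (Real.exp (-u) -
        ∑ k ∈ Finset.range (n + 1), (-u) ^ k / (k.factorial : ℝ)))
        ((-1 : ℝ) ^ n * (Real.exp (-u) - ∑ k ∈ Finset.range n, (-u) ^ k / (k.factorial : ℝ))) u := by
      intro u
      have h1 : HasDerivAt (fun u : ℝ => Real.exp (-u)) (-Real.exp (-u)) u := by
        simpa using (hasDerivAt_neg u).exp
      have h2 : HasDerivAt (fun u : ℝ => ∑ k ∈ Finset.range (n + 1), (-u) ^ k / (k.factorial : ℝ))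
          (-∑ k ∈ Finset.range n, (-u) ^ k / (k.factorial : ℝ)) u := by
        have : ∀ k ∈ Finset.range (n + 1), HasDerivAt (fun u : ℝ => (-u) ^ k / (k.factorial : ℝ))
            ((k : ℝ) * (-u) ^ (k - 1) * (-1) / (k.factorial : ℝ)) u := by
          intro k _
          exact ((hasDerivAt_neg u).pow k).div_const _
        have h := HasDerivAt.fun_sum this
        refine h.congr_deriv ?_
        symm
        rw [Finset.sum_range_succ', ← Finset.sum_neg_distrib]
        simp only [Nat.cast_zero, zero_mul, zero_div, add_zero]
        refine Finset.sum_congr rfl fun k _ => ?_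
        rw [Nat.factorial_succ]
        have : (k.factorial : ℝ) ≠ 0 := by positivity
        push_cast
        field_simp
      have h3 := (h1.sub h2).const_mul ((-1 : ℝ) ^ (n + 1))
      refine h3.congr_deriv ?_
      ring
    have hm : MonotoneOn (fun u : ℝ => (-1 : ℝ) ^ (n + 1) * (Real.exp (-u) -
        ∑ k ∈ Finset.range (n + 1), (-u) ^ k / (k.factorial : ℝ))) (Ici 0) := by
      apply monotoneOn_of_deriv_nonneg (convex_Ici 0)
      · exact fun u _ => (hd u).continuousAt.continuousWithinAt
      · exact fun u _ => (hd u).differentiableAt.differentiableWithinAt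
      · intro u hu
        rw [(hd u).deriv]
        rw [interior_Ici] at hu
        exact ih u (le_of_lt hu)
    have := hm (mem_Ici.2 le_rfl) (mem_Ici.2 hv) hv
    refine le_trans (le_of_eq ?_) this
    simp [Finset.sum_range_succ']

lemma chord {g : ℝ → ℝ} (hg : ConvexOn ℝ (Ioi 0) g) {a0 b0 a b : ℝ} (h0 : 0 < a0)
    (h1 : a0 < b0) (h2 : a0 ≤ a) (h3 : b0 ≤ b) (h4 : a < b) :
    (b * g a - a * g b) / (b - a) ≤ (b0 * g a0 - a0 * g b0) / (b0 - a0) := by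
  have s1 := hg.secant_mono (a := a0) (x := b0) (y := b) h0 (h0.trans h1)
    (h0.trans (h1.trans_le h3)) h1.ne' (h1.trans_le h3).ne' h3
  have s2 := hg.secant_mono (a := b) (x := a0) (y := a) (h0.trans (h1.trans_le h3)) h0
    (h0.trans_le h2) (h1.trans_le h3).ne h4.ne h2
  have e1 : (b0 * g a0 - a0 * g b0) / (b0 - a0) = g a0 - a0 * ((g b0 - g a0) / (b0 - a0)) := by
    have : b0 - a0 ≠ 0 := by linarith
    field_simp; ring
  have e2 : (b * g a0 - a0 * g b) / (b - a0) = g a0 - a0 * ((g b - g a0) / (b - a0)) := by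
    have : b - a0 ≠ 0 := by linarith
    field_simp; ring
  have e3 : (b * g a0 - a0 * g b) / (b - a0) = g b - b * ((g a0 - g b) / (a0 - b)) := by
    have : b - a0 ≠ 0 := by linarith
    have : a0 - b ≠ 0 := by linarith
    field_simp; ring
  have e4 : (b * g a - a * g b) / (b - a) = g b - b * ((g a - g b) / (a - b)) := by
    have : b - a ≠ 0 := by linarith
    have : a - b ≠ 0 := by linarith
    field_simp; ring
  have := mul_le_mul_of_nonneg_left s1 h0.le
  have := mul_le_mul_of_nonneg_left s2 (show 0 ≤ b by linarith)
  linarith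

lemma phi_convex {k : ℝ} (hk : 0 < k) :
    ConvexOn ℝ (Ioi 0) (fun u : ℝ => u * (1 / (Real.exp (k * u) - 1))) := by
  have hpos : ∀ u : ℝ, 0 < u → 0 < Real.exp (k * u) - 1 := by
    intro u hu
    have := Real.one_lt_exp_iff.2 (mul_pos hk hu)
    linarith
  have hE : ∀ u : ℝ, HasDerivAt (fun u : ℝ => Real.exp (k * u)) (k * Real.exp (k * u)) u := by
    intro u
    have := ((hasDerivAt_id u).const_mul k).exp
    refine HasDerivAt.congr_deriv this ?_
    simp only [id]; ring
  have d1 : ∀ u : ℝ, 0 < u → HasDerivAt (fun u : ℝ => u * (1 / (Real.exp (k * u) - 1)))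
      ((Real.exp (k * u) - 1 - k * u * Real.exp (k * u)) / (Real.exp (k * u) - 1) ^ 2) u := by
    intro u hu
    have hp := (hpos u hu).ne'
    have := (hasDerivAt_id u).mul (((hasDerivAt_const u (1 : ℝ)).div ((hE u).sub_const 1) hp))
    refine HasDerivAt.congr_deriv this ?_
    simp only [id, Pi.div_apply]
    field_simp
    ring
  have d2 : ∀ u : ℝ, 0 < u → HasDerivAt
      (fun u : ℝ => (Real.exp (k * u) - 1 - k * u * Real.exp (k * u)) / (Real.exp (k * u) - 1) ^ 2)
      (k * Real.exp (k * u) * ((k * u - 2) * Real.exp (k * u) + k * u + 2) /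
        (Real.exp (k * u) - 1) ^ 3) u := by
    intro u hu
    have hp := (hpos u hu).ne'
    have := (((hE u).sub_const 1).sub (((hasDerivAt_id u).const_mul k).mul (hE u))).div
      (((hE u).sub_const 1).pow 2) (pow_ne_zero 2 hp)
    refine HasDerivAt.congr_deriv this ?_
    simp only [id, Pi.pow_apply, Pi.sub_apply, Pi.mul_apply]
    field_simp
    ring
  have key : ∀ y : ℝ, 0 ≤ y → 0 ≤ (y - 2) * Real.exp y + y + 2 := by
    intro y hy
    have hd : ∀ y : ℝ, HasDerivAt (fun y : ℝ => (y - 2) * Real.exp y + y + 2)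
        ((y - 1) * Real.exp y + 1) y := by
      intro y
      have := (((((hasDerivAt_id y).sub_const 2).mul (Real.hasDerivAt_exp y))).add
        (hasDerivAt_id y)).add_const 2
      refine HasDerivAt.congr_deriv this ?_
      simp only [id]; ring
    have hm : MonotoneOn (fun y : ℝ => (y - 2) * Real.exp y + y + 2) (Ici 0) := by
      apply monotoneOn_of_deriv_nonneg (convex_Ici 0)
      · exact fun u _ => (hd u).continuousAt.continuousWithinAt
      · exact fun u _ => (hd u).differentiableAt.differentiableWithinAt
      · intro u hu
        rw [(hd u).deriv]
        have h1 := Real.add_one_le_exp (-u)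
        have h2 : Real.exp (-u) * Real.exp u = 1 := by rw [← Real.exp_add]; simp
        have h3 := mul_le_mul_of_nonneg_right h1 (Real.exp_pos u).le
        linarith
    have := hm (mem_Ici.2 le_rfl) (mem_Ici.2 hy) hy
    simpa using this
  apply convexOn_of_hasDerivWithinAt2_nonneg (convex_Ioi 0)
    (f' := fun u => (Real.exp (k * u) - 1 - k * u * Real.exp (k * u)) / (Real.exp (k * u) - 1) ^ 2)
    (f'' := fun u => k * Real.exp (k * u) * ((k * u - 2) * Real.exp (k * u) + k * u + 2) /
        (Real.exp (k * u) - 1) ^ 3)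
  · exact fun u hu => (d1 u hu).continuousAt.continuousWithinAt
  · intro u hu
    rw [interior_Ioi] at hu
    exact (d1 u hu).hasDerivWithinAt
  · intro u hu
    rw [interior_Ioi] at hu
    exact (d2 u hu).hasDerivWithinAt
  · intro u hu
    rw [interior_Ioi] at hu
    have := key (k * u) (mul_pos hk hu).le
    have := hpos u hu
    positivity

lemma h_convex : ConvexOn ℝ (Ioi 0) (fun u : ℝ => (1 - Real.exp (-u)) / u) := by
  have hE : ∀ u : ℝ, HasDerivAt (fun u : ℝ => Real.exp (-u)) (-Real.exp (-u)) u := by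
    intro u
    simpa using (hasDerivAt_neg u).exp
  have d1 : ∀ u : ℝ, 0 < u → HasDerivAt (fun u : ℝ => (1 - Real.exp (-u)) / u)
      ((Real.exp (-u) * (u + 1) - 1) / u ^ 2) u := by
    intro u hu
    have := ((hE u).const_sub 1).div (hasDerivAt_id u) hu.ne'
    refine HasDerivAt.congr_deriv this ?_
    simp only [id]
    field_simp
    ring
  have d2 : ∀ u : ℝ, 0 < u → HasDerivAt (fun u : ℝ => (Real.exp (-u) * (u + 1) - 1) / u ^ 2)
      ((2 - Real.exp (-u) * (u ^ 2 + 2 * u + 2)) / u ^ 3) u := by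
    intro u hu
    have := (((hE u).mul ((hasDerivAt_id u).add_const 1)).sub_const 1).div
      ((hasDerivAt_id u).pow 2) (pow_ne_zero 2 hu.ne')
    refine HasDerivAt.congr_deriv this ?_
    simp only [id, Pi.pow_apply, Pi.mul_apply]
    field_simp
    ring
  apply convexOn_of_hasDerivWithinAt2_nonneg (convex_Ioi 0)
    (f' := fun u => (Real.exp (-u) * (u + 1) - 1) / u ^ 2)
    (f'' := fun u => (2 - Real.exp (-u) * (u ^ 2 + 2 * u + 2)) / u ^ 3)
  · exact fun u hu => (d1 u hu).continuousAt.continuousWithinAt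
  · intro u hu
    rw [interior_Ioi] at hu
    exact (d1 u hu).hasDerivWithinAt
  · intro u hu
    rw [interior_Ioi] at hu
    exact (d2 u hu).hasDerivWithinAt
  · intro u hu
    rw [interior_Ioi] at hu
    have hu' : 0 < u := hu
    have h1 := Real.quadratic_le_exp_of_nonneg hu'.le
    have h2 : Real.exp (-u) * Real.exp u = 1 := by rw [← Real.exp_add]; simp
    have h3 := mul_le_mul_of_nonneg_left h1 (Real.exp_pos (-u)).le
    apply div_nonneg _ (by positivity)
    nlinarith

lemma expc (t : ℝ) : ConvexOn ℝ (Ioi 0) (fun u : ℝ => Real.exp (-(u * t))) := by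
  have h := (convexOn_exp.comp_linearMap ((-t) • (LinearMap.id : ℝ →ₗ[ℝ] ℝ)))
  have h2 := h.subset (subset_univ (Ioi 0)) (convex_Ioi 0)
  refine h2.congr ?_
  intro u _
  simp; ring

/-- intercept term -/
noncomputable def AA (a b t : ℝ) : ℝ :=
  (b * (1 - Real.exp (-(a * t))) - a * (1 - Real.exp (-(b * t)))) / (b - a)

noncomputable def SS (a b t : ℝ) : ℝ :=
  a * b * (1 / (Real.exp (2 * t * a) - 1) - 1 / (Real.exp (2 * t * b) - 1)) / (b - a)

lemma AA_mono {a0 b0 a b : ℝ} (t : ℝ) (h0 : 0 < a0)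
    (h1 : a0 < b0) (h2 : a0 ≤ a) (h3 : b0 ≤ b) (h4 : a < b) : AA a0 b0 t ≤ AA a b t := by
  have h := chord (expc t) h0 h1 h2 h3 h4
  have e : ∀ a b : ℝ, a < b → AA a b t =
      1 - (b * Real.exp (-(a * t)) - a * Real.exp (-(b * t))) / (b - a) := by
    intro a b hab
    have : b - a ≠ 0 := by linarith
    unfold AA
    field_simp
    ring
  rw [e _ _ h1, e _ _ h4]
  linarith

lemma SS_mono {a0 b0 a b t : ℝ} (ht : 0 < t) (h0 : 0 < a0)
    (h1 : a0 < b0) (h2 : a0 ≤ a) (h3 : b0 ≤ b) (h4 : a < b) : SS a b t ≤ SS a0 b0 t := by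
  have h := chord (phi_convex (k := 2 * t) (by positivity)) h0 h1 h2 h3 h4
  unfold SS
  convert h using 2 <;> ring

lemma SS_le {a b t : ℝ} (ht : 0 < t) (ha : 0 < a) (hab : a < b) : SS a b t ≤ 1 / (2 * t) := by
  by_contra hc
  push Not at hc
  set I := SS a b t with hI
  have hk : 0 < 1 / (2 * t) := by positivity
  have hIp : 0 < I := hk.trans hc
  have hb : 0 < b := ha.trans hab
  set e := min a (b * (I - 1 / (2 * t)) / (2 * I)) with he
  have hq : 0 < b * (I - 1 / (2 * t)) / (2 * I) := by
    apply div_pos (mul_pos hb (by linarith)) (by positivity)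
  have he0 : 0 < e := lt_min ha hq
  have hea : e ≤ a := min_le_left _ _
  have heb : e < b := by linarith
  have h := SS_mono ht he0 heb hea le_rfl hab
  have h2 : SS e b t ≤ b * (1 / (2 * t)) / (b - e) := by
    unfold SS
    have h3 : 0 < Real.exp (2 * t * b) - 1 := by
      have := Real.one_lt_exp_iff.2 (show 0 < 2 * t * b by positivity)
      linarith
    have h4 : 2 * t * e ≤ Real.exp (2 * t * e) - 1 := by
      have := Real.add_one_le_exp (2 * t * e)
      linarith
    have h5 : 1 / (Real.exp (2 * t * e) - 1) ≤ 1 / (2 * t * e) :=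
      one_div_le_one_div_of_le (by positivity) h4
    have h6 : e * b * (1 / (Real.exp (2 * t * e) - 1) - 1 / (Real.exp (2 * t * b) - 1))
        ≤ e * b * (1 / (2 * t * e)) := by
      have : 0 < 1 / (Real.exp (2 * t * b) - 1) := by positivity
      apply mul_le_mul_of_nonneg_left _ (by positivity)
      linarith
    have h7 : e * b * (1 / (2 * t * e)) = b * (1 / (2 * t)) := by field_simp
    rw [h7] at h6
    exact div_le_div_of_nonneg_right h6 (by linarith)
  have h8 := h.trans h2
  rw [← hI, le_div_iff₀ (by linarith)] at h8
  have h9 : e * (2 * I) ≤ b * (I - 1 / (2 * t)) := by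
    have := min_le_right a (b * (I - 1 / (2 * t)) / (2 * I))
    rwa [← he, le_div_iff₀ (by positivity)] at this
  have : 0 < b * (I - 1 / (2 * t)) := mul_pos hb (by linarith)
  nlinarith

lemma AA_s {a0 b0 a b t : ℝ} (ht : 0 < t) (h0 : 0 < a0)
    (h1 : a0 < b0) (h2 : a0 ≤ a) (h3 : b0 ≤ b) (h4 : a < b) {τ : ℝ} (hτ : a0 * b0 * τ = a * b * t) :
    AA a0 b0 τ / τ ≤ AA a b t / t := by
  have ha : 0 < a := by linarith
  have hb : 0 < b := by linarith
  have hb0 : 0 < b0 := by linarith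
  have hτ0 : 0 < τ := by
    have : 0 < a0 * b0 * τ := by rw [hτ]; positivity
    exact pos_of_mul_pos_right this (by positivity)
  have e : ∀ a b t : ℝ, 0 < a → a < b → 0 < t → AA a b t / t = - (a * b * t) *
     (((1 - Real.exp (-(b * t))) / (b * t) - (1 - Real.exp (-(a * t))) / (a * t)) /
       (b * t - a * t)) := by
    intro a b t ha hab ht
    have : b - a ≠ 0 := by linarith
    have : 0 < b := by linarith
    have e2 : b * t - a * t = (b - a) * t := by ring
    unfold AA
    rw [e2]
    field_simp
    ring
  rw [e _ _ _ h0 h1 hτ0, e _ _ _ ha h4 ht, hτ]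
  have hy : a * t ≤ a0 * τ := by
    have : b * (a * t) = b0 * (a0 * τ) := by linarith
    have h5 : b0 * (a0 * τ) ≤ b * (a0 * τ) := mul_le_mul_of_nonneg_right h3 (by positivity)
    rw [← this] at h5
    exact le_of_mul_le_mul_left h5 hb
  have hz : b * t ≤ b0 * τ := by
    have : a * (b * t) = a0 * (b0 * τ) := by linarith
    have h5 : a0 * (b0 * τ) ≤ a * (b0 * τ) := mul_le_mul_of_nonneg_right h2 (by positivity)
    rw [← this] at h5
    exact le_of_mul_le_mul_left h5 ha
  have hyz : a * t < b * t := mul_lt_mul_of_pos_right h4 ht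
  have hyz0 : a0 * τ < b0 * τ := mul_lt_mul_of_pos_right h1 hτ0
  have hy0 : 0 < a * t := by positivity
  set y := a * t
  set z := b * t
  set y0 := a0 * τ
  set z0 := b0 * τ
  have s1 := h_convex.secant_mono (a := y) (x := z) (y := z0) hy0 (hy0.trans hyz)
    (hy0.trans (hyz.trans_le hz)) hyz.ne' (hyz.trans_le hz).ne' hz
  have s2 := h_convex.secant_mono (a := z0) (x := y) (y := y0) (hy0.trans (hyz.trans_le hz)) hy0
    (hy0.trans_le hy) (hyz.trans_le hz).ne hyz0.ne hy
  have sw : ∀ p q r s : ℝ, (p - q) / (r - s) = (q - p) / (s - r) := by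
    intro p q r s
    rw [← neg_sub q p, ← neg_sub s r, neg_div_neg_eq]
  rw [sw _ _ y, sw _ _ y0] at s2
  have s3 := s1.trans s2
  have : 0 < a * b * t := by positivity
  have := mul_le_mul_of_nonneg_left s3 this.le
  linarith
lemma cg (x : ℝ) (h0 : 0 ≤ x) (h1 : x ≤ 42/25) : 0 ≤ (x + (1/2 - x/2 + x^2/6 - x^4/90))*(1 + (-(2*x)) + (-(2*x))^2/2 + (-(2*x))^3/6 + (-(2*x))^4/24 + (-(2*x))^5/120 + (-(2*x))^6/720 + (-(2*x))^7/5040 + (-(2*x))^8/40320 + (-(2*x))^9/362880 + (-(2*x))^10/3628800 + (-(2*x))^11/39916800) - (1/2 - x/2 + x^2/6 - x^4/90) := by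
  have h0 : 0 ≤ x - 0 := by linarith
  have h1 : 0 ≤ 42/25 - x := by linarith
  have h : (x + (1/2 - x/2 + x^2/6 - x^4/90))*(1 + (-(2*x)) + (-(2*x))^2/2 + (-(2*x))^3/6 + (-(2*x))^4/24 + (-(2*x))^5/120 + (-(2*x))^6/720 + (-(2*x))^7/5040 + (-(2*x))^8/40320 + (-(2*x))^9/362880 + (-(2*x))^10/3628800 + (-(2*x))^11/39916800) - (1/2 - x/2 + x^2/6 - x^4/90) =
    30517578125/915010613661312 * (x - 0)^7 * (42/25 - x)^8 +
    96435546875/457505306830656 * (x - 0)^8 * (42/25 - x)^7 +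
    19443359375/32678950487904 * (x - 0)^9 * (42/25 - x)^6 +
    63672265625/65357900975808 * (x - 0)^10 * (42/25 - x)^5 +
    725817546875/718936910733888 * (x - 0)^11 * (42/25 - x)^4 +
    485762348125/718936910733888 * (x - 0)^12 * (42/25 - x)^3 +
    101411936125/359468455366944 * (x - 0)^13 * (42/25 - x)^2 +
    1605509975843/25162791875686080 * (x - 0)^14 * (42/25 - x)^1 +
    6312219351491/1258139593784304000 * (x - 0)^15 * (42/25 - x)^0 := by ring
  rw [h]; positivity

lemma c1a (x : ℝ) (h0 : 0 ≤ x) (h1 : x ≤ 21/100) : 0 ≤ (1 - (1 + (-(2*x)) + (-(2*x))^2/2 + (-(2*x))^3/6 + (-(2*x))^4/24 + (-(2*x))^5/120 + (-(2*x))^6/720))^2 + x*((1/2*(1 + (-(5*x^2/2)) + (-(5*x^2/2))^2/2 + (-(5*x^2/2))^3/6)) + (1/2 - 8*x/2 + (8*x)^2/6 - (8*x)^4/90) - 1 - x^4/100) := by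
  have h0 : 0 ≤ x - 0 := by linarith
  have h1 : 0 ≤ 21/100 - x := by linarith
  have h : (1 - (1 + (-(2*x)) + (-(2*x))^2/2 + (-(2*x))^3/6 + (-(2*x))^4/24 + (-(2*x))^5/120 + (-(2*x))^6/720))^2 + x*((1/2*(1 + (-(5*x^2/2)) + (-(5*x^2/2))^2/2 + (-(5*x^2/2))^3/6)) + (1/2 - 8*x/2 + (8*x)^2/6 - (8*x)^4/90) - 1 - x^4/100) =
    4250000000000000000/2382840139743 * (x - 0)^3 * (21/100 - x)^9 +
    14710000000000000000/794280046581 * (x - 0)^4 * (21/100 - x)^8 +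
    64388625250000000000/794280046581 * (x - 0)^5 * (21/100 - x)^7 +
    22555916450000000000/113468578083 * (x - 0)^6 * (21/100 - x)^6 +
    34348372136187500000/113468578083 * (x - 0)^7 * (21/100 - x)^5 +
    33746328345657500000/113468578083 * (x - 0)^8 * (21/100 - x)^4 +
    21356787510131000000/113468578083 * (x - 0)^9 * (21/100 - x)^3 +
    58442703143658529600/794280046581 * (x - 0)^10 * (21/100 - x)^2 +
    12655151457105188896/794280046581 * (x - 0)^11 * (21/100 - x)^1 +
    84610814326208919248/59571003493575 * (x - 0)^12 * (21/100 - x)^0 := by ring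
  rw [h]; positivity

lemma c1b (x : ℝ) (h0 : 21/100 ≤ x) (h1 : x ≤ 3/5) : 0 ≤ (1 - (1 + (-(2*x)) + (-(2*x))^2/2 + (-(2*x))^3/6 + (-(2*x))^4/24 + (-(2*x))^5/120 + (-(2*x))^6/720))^2 + x*((1/2*(1 + (-(5*x^2/2)) + (-(5*x^2/2))^2/2 + (-(5*x^2/2))^3/6 + (-(5*x^2/2))^4/24 + (-(5*x^2/2))^5/120)) - 1 - x^4/100) := by
  have h0 : 0 ≤ x - 21/100 := by linarith
  have h1 : 0 ≤ 3/5 - x := by linarith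
  have h : (1 - (1 + (-(2*x)) + (-(2*x))^2/2 + (-(2*x))^3/6 + (-(2*x))^4/24 + (-(2*x))^5/120 + (-(2*x))^6/720))^2 + x*((1/2*(1 + (-(5*x^2/2)) + (-(5*x^2/2))^2/2 + (-(5*x^2/2))^3/6 + (-(5*x^2/2))^4/24 + (-(5*x^2/2))^5/120)) - 1 - x^4/100) =
    1761677788724214145039451/13206994832614853462400 * (x - 21/100)^0 * (3/5 - x)^12 +
    25053070087647613590333019/2641398966522970692480 * (x - 21/100)^1 * (3/5 - x)^11 +
    12893814537446703364493551/132069948326148534624 * (x - 21/100)^2 * (3/5 - x)^10 +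
    15425394920601494760220675/33017487081537133656 * (x - 21/100)^3 * (3/5 - x)^9 +
    3630956826952690180639625/2751457256794761138 * (x - 21/100)^4 * (3/5 - x)^8 +
    3339504678102633393864500/1375728628397380569 * (x - 21/100)^5 * (3/5 - x)^7 +
    465110513138481310210000/152858736488597841 * (x - 21/100)^6 * (3/5 - x)^6 +
    3632786113955875832200000/1375728628397380569 * (x - 21/100)^7 * (3/5 - x)^5 +
    2166546300541125020000000/1375728628397380569 * (x - 21/100)^8 * (3/5 - x)^4 +
    2574277660983856600000000/4127185885192141707 * (x - 21/100)^9 * (3/5 - x)^3 +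
    626424507943208800000000/4127185885192141707 * (x - 21/100)^10 * (3/5 - x)^2 +
    78316551630896000000000/4127185885192141707 * (x - 21/100)^11 * (3/5 - x)^1 +
    2821675148480000000000/4127185885192141707 * (x - 21/100)^12 * (3/5 - x)^0 := by ring
  rw [h]; positivity

lemma c1c (x : ℝ) (h0 : 3/5 ≤ x) (h1 : x ≤ 13/20) : 0 ≤ (1 - (1 + (-(2*x)) + (-(2*x))^2/2 + (-(2*x))^3/6 + (-(2*x))^4/24 + (-(2*x))^5/120 + (-(2*x))^6/720))^2 - 4/5*x := by
  have h0 : 0 ≤ x - 3/5 := by linarith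
  have h1 : 0 ≤ 13/20 - x := by linarith
  have h : (1 - (1 + (-(2*x)) + (-(2*x))^2/2 + (-(2*x))^3/6 + (-(2*x))^4/24 + (-(2*x))^5/120 + (-(2*x))^6/720))^2 - 4/5*x =
    764682285613056/25 * (x - 3/5)^0 * (13/20 - x)^12 +
    9336457168683008/25 * (x - 3/5)^1 * (13/20 - x)^11 +
    52095089761058816/25 * (x - 3/5)^2 * (13/20 - x)^10 +
    35134335998754816/5 * (x - 3/5)^3 * (13/20 - x)^9 +
    239258380552896512/15 * (x - 3/5)^4 * (13/20 - x)^8 +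
    1925818525794566144/75 * (x - 3/5)^5 * (13/20 - x)^7 +
    6763630661621088256/225 * (x - 3/5)^6 * (13/20 - x)^6 +
    644655710947524608/25 * (x - 3/5)^7 * (13/20 - x)^5 +
    723855273867723776/45 * (x - 3/5)^8 * (13/20 - x)^4 +
    960682846303511552/135 * (x - 3/5)^9 * (13/20 - x)^3 +
    1430386064657364992/675 * (x - 3/5)^10 * (13/20 - x)^2 +
    85803983504294272/225 * (x - 3/5)^11 * (13/20 - x)^1 +
    63506056422215056/2025 * (x - 3/5)^12 * (13/20 - x)^0 := by ring
  rw [h]; positivity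

lemma c1u (x : ℝ) (h0 : 0 ≤ x) (h1 : x ≤ 13/20) : 0 ≤ 1 - (1 + (-(2*x)) + (-(2*x))^2/2 + (-(2*x))^3/6 + (-(2*x))^4/24 + (-(2*x))^5/120 + (-(2*x))^6/720) := by
  have h0 : 0 ≤ x - 0 := by linarith
  have h1 : 0 ≤ 13/20 - x := by linarith
  have h : 1 - (1 + (-(2*x)) + (-(2*x))^2/2 + (-(2*x))^3/6 + (-(2*x))^4/24 + (-(2*x))^5/120 + (-(2*x))^6/720) =
    6400000/371293 * (x - 0)^1 * (13/20 - x)^5 +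
    27840000/371293 * (x - 0)^2 * (13/20 - x)^4 +
    147488000/1113879 * (x - 0)^3 * (13/20 - x)^3 +
    131586400/1113879 * (x - 0)^4 * (13/20 - x)^2 +
    19748592/371293 * (x - 0)^5 * (13/20 - x)^1 +
    160925468/16708185 * (x - 0)^6 * (13/20 - x)^0 := by ring
  rw [h]; positivity

lemma cL (x : ℝ) (h0 : 0 ≤ x) (h1 : x ≤ 13/20) : 0 ≤ (1 + (-(x)) + (-(x))^2/2 + (-(x))^3/6 + (-(x))^4/24 + (-(x))^5/120) := by
  have h0 : 0 ≤ x - 0 := by linarith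
  have h1 : 0 ≤ 13/20 - x := by linarith
  have h : (1 + (-(x)) + (-(x))^2/2 + (-(x))^3/6 + (-(x))^4/24 + (-(x))^5/120) =
    3200000/371293 * (x - 0)^0 * (13/20 - x)^5 +
    13920000/371293 * (x - 0)^1 * (13/20 - x)^4 +
    24356000/371293 * (x - 0)^2 * (13/20 - x)^3 +
    64204600/1113879 * (x - 0)^3 * (13/20 - x)^2 +
    18877735/742586 * (x - 0)^4 * (13/20 - x)^1 +
    200428807/44555160 * (x - 0)^5 * (13/20 - x)^0 := by ring
  rw [h]; positivity

lemma cr (x : ℝ) (h0 : 0 ≤ x) (h1 : x ≤ 13/20) : 0 ≤ 2*x*(1 + (-(x)) + (-(x))^2/2 + (-(x))^3/6 + (-(x))^4/24 + (-(x))^5/120)*(1+(1 + (-(x)) + (-(x))^2/2 + (-(x))^3/6 + (-(x))^4/24 + (-(x))^5/120))*(x*(1+x^4/100)) - 2*x*(1 + (-(x)) + (-(x))^2/2 + (-(x))^3/6 + (-(x))^4/24 + (-(x))^5/120)*(1-(1 + (-(x)) + (-(x))^2/2 + (-(x))^3/6 + (-(x))^4/24 + (-(x))^5/120)) - (1-(1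 + (-(x)) + (-(x))^2/2 + (-(x))^3/6 + (-(x))^4/24 + (-(x))^5/120))^2*(1+(1 + (-(x)) + (-(x))^2/2 + (-(x))^3/6 + (-(x))^4/24 + (-(x))^5/120)) := by
  have h0 : 0 ≤ x - 0 := by linarith
  have h1 : 0 ≤ 13/20 - x := by linarith
  have h : 2*x*(1 + (-(x)) + (-(x))^2/2 + (-(x))^3/6 + (-(x))^4/24 + (-(x))^5/120)*(1+(1 + (-(x)) + (-(x))^2/2 + (-(x))^3/6 + (-(x))^4/24 + (-(x))^5/120))*(x*(1+x^4/100)) - 2*x*(1 + (-(x)) + (-(x))^2/2 + (-(x))^3/6 + (-(x))^4/24 + (-(x))^5/120)*(1-(1 + (-(x)) + (-(x))^2/2 + (-(x))^3/6 + (-(x))^4/24 + (-(x))^5/120)) - (1-(1 + (-(x)) + (-(x))^2/2 + (-(x))^3/6 + (-(x))^4/24 + (-(x))^5/120))^2*(1+(1 + (-(x)) + (-(x))^2/2 + (-(x))^3/6 + (-(x))^4/24 + (-(x))^5/120)) =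
    1638400000000/1240726426641 * (x - 0)^6 * (13/20 - x)^10 +
    14287360000000/1240726426641 * (x - 0)^7 * (13/20 - x)^9 +
    18664640000000/413575475547 * (x - 0)^8 * (13/20 - x)^8 +
    389217786400000/3722179279923 * (x - 0)^9 * (13/20 - x)^7 +
    589718919340000/3722179279923 * (x - 0)^10 * (13/20 - x)^6 +
    203200189253800/1240726426641 * (x - 0)^11 * (13/20 - x)^5 +
    289717559730665/2481452853282 * (x - 0)^12 * (13/20 - x)^4 +
    561169116249553/9925811413128 * (x - 0)^13 * (13/20 - x)^3 +
    3520796745677867/198516228262560 * (x - 0)^14 * (13/20 - x)^2 +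
    38570997693835661/11910973695753600 * (x - 0)^15 * (13/20 - x)^1 +
    19302735730839143/74443585598460000 * (x - 0)^16 * (13/20 - x)^0 := by ring
  rw [h]; positivity

lemma c24 (x : ℝ) (h0 : 0 ≤ x) (h1 : x ≤ 31/50) : 0 ≤ (1-2*x^2+x^4)*(1+x)*(1-x^8) - (1-x)*(1-x^8) - 4*(1-x)^2*x^3*(1+x) := by
  have h0 : 0 ≤ x - 0 := by linarith
  have h1 : 0 ≤ 31/50 - x := by linarith
  have h : (1-2*x^2+x^4)*(1+x)*(1-x^8) - (1-x)*(1-x^8) - 4*(1-x)^2*x^3*(1+x) =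
    488281250000000000000/787662783788549761 * (x - 0)^1 * (31/50 - x)^12 +
    5556640625000000000000/787662783788549761 * (x - 0)^2 * (31/50 - x)^11 +
    28333398437500000000000/787662783788549761 * (x - 0)^3 * (31/50 - x)^10 +
    85431552734375000000000/787662783788549761 * (x - 0)^4 * (31/50 - x)^9 +
    169207904492187500000000/787662783788549761 * (x - 0)^5 * (31/50 - x)^8 +
    231073027653125000000000/787662783788549761 * (x - 0)^6 * (31/50 - x)^7 +
    221922719353125000000000/787662783788549761 * (x - 0)^7 * (31/50 - x)^6 +
    149836929934375000000000/787662783788549761 * (x - 0)^8 * (31/50 - x)^5 +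
    69690011799531987500000/787662783788549761 * (x - 0)^9 * (31/50 - x)^4 +
    21271983213043117750000/787662783788549761 * (x - 0)^10 * (31/50 - x)^3 +
    3842381589622332255000/787662783788549761 * (x - 0)^11 * (31/50 - x)^2 +
    317637017523441018450/787662783788549761 * (x - 0)^12 * (31/50 - x)^1 +
    2286592690950463689/787662783788549761 * (x - 0)^13 * (31/50 - x)^0 := by ring
  rw [h]; positivity

lemma c26 (x : ℝ) (h0 : 0 ≤ x) (h1 : x ≤ 727/1000) : 0 ≤ (1-3/2*x^2+1/2*x^6)*(1+x)*(1-x^12) - (1-x)*(1-x^12) - 3*(1-x)^2*x^3*(1+x^4)*(1+x) := by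
  have h0 : 0 ≤ x - 0 := by linarith
  have h1 : 0 ≤ 727/1000 - x := by linarith
  have h : (1-3/2*x^2+1/2*x^6)*(1+x)*(1-x^12) - (1-x)*(1-x^12) - 3*(1-x)^2*x^3*(1+x^4)*(1+x) =
    2000000000000000000000000000000000000000000000000000000/3218247165847493042444397662246541308445637363972369 * (x - 0)^1 * (727/1000 - x)^18 +
    34909500000000000000000000000000000000000000000000000000/3218247165847493042444397662246541308445637363972369 * (x - 0)^2 * (727/1000 - x)^17 +
    285083119500000000000000000000000000000000000000000000000/3218247165847493042444397662246541308445637363972369 * (x - 0)^3 * (727/1000 - x)^16 +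
    1446790633749000000000000000000000000000000000000000000000/3218247165847493042444397662246541308445637363972369 * (x - 0)^4 * (727/1000 - x)^15 +
    5111183194946523000000000000000000000000000000000000000000/3218247165847493042444397662246541308445637363972369 * (x - 0)^5 * (727/1000 - x)^14 +
    13340977399878590982500000000000000000000000000000000000000/3218247165847493042444397662246541308445637363972369 * (x - 0)^6 * (727/1000 - x)^13 +
    26645113222019029322777500000000000000000000000000000000000/3218247165847493042444397662246541308445637363972369 * (x - 0)^7 * (727/1000 - x)^12 +
    41598005347488313574667909000000000000000000000000000000000/3218247165847493042444397662246541308445637363972369 * (x - 0)^8 * (727/1000 - x)^11 +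
    51396586682543790979549658843000000000000000000000000000000/3218247165847493042444397662246541308445637363972369 * (x - 0)^9 * (727/1000 - x)^10 +
    50544046904977870403653254724139000000000000000000000000000/3218247165847493042444397662246541308445637363972369 * (x - 0)^10 * (727/1000 - x)^9 +
    39556563295635490075987129582251000000000000000000000000000/3218247165847493042444397662246541308445637363972369 * (x - 0)^11 * (727/1000 - x)^8 +
    24489836629053057651708957749004000000000000000000000000000/3218247165847493042444397662246541308445637363972369 * (x - 0)^12 * (727/1000 - x)^7 +
    11843187332912241876946253062908335895358000000000000000000/3218247165847493042444397662246541308445637363972369 * (x - 0)^13 * (727/1000 - x)^6 +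
    4378907853701647357020656171825084225204050500000000000000/3218247165847493042444397662246541308445637363972369 * (x - 0)^14 * (727/1000 - x)^5 +
    1196034692209651218981691196145091751822001213500000000000/3218247165847493042444397662246541308445637363972369 * (x - 0)^15 * (727/1000 - x)^4 +
    228052983988261125041679047736242662407499854000000000000/3218247165847493042444397662246541308445637363972369 * (x - 0)^16 * (727/1000 - x)^3 +
    27426251735765425698657301023981297960997281000000000000/3218247165847493042444397662246541308445637363972369 * (x - 0)^17 * (727/1000 - x)^2 +
    1676756736759693360149499103414399569643196065086676500/3218247165847493042444397662246541308445637363972369 * (x - 0)^18 * (727/1000 - x)^1 +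
    49217894851928530389968561002437539081665492809380631/6436494331694986084888795324493082616891274727944738 * (x - 0)^19 * (727/1000 - x)^0 := by ring
  rw [h]; positivity

lemma c34 (x : ℝ) (h0 : 0 ≤ x) (h1 : x ≤ 727/1000) : 0 ≤ (1-4*x^3+3*x^4)*(1+x)*(1-x^6)*(1-x^8) - (1-x)*(1-x^6)*(1-x^8) - 12*(1-x)^2*x^5*(1-x^2)*(1+x) := by
  have h0 : 0 ≤ x - 0 := by linarith
  have h1 : 0 ≤ 727/1000 - x := by linarith
  have h : (1-4*x^3+3*x^4)*(1+x)*(1-x^6)*(1-x^8) - (1-x)*(1-x^6)*(1-x^8) - 12*(1-x)^2*x^5*(1-x^2)*(1+x) =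
    2000000000000000000000000000000000000000000000000000000/3218247165847493042444397662246541308445637363972369 * (x - 0)^1 * (727/1000 - x)^18 +
    36000000000000000000000000000000000000000000000000000000/3218247165847493042444397662246541308445637363972369 * (x - 0)^2 * (727/1000 - x)^17 +
    303885884000000000000000000000000000000000000000000000000/3218247165847493042444397662246541308445637363972369 * (x - 0)^3 * (727/1000 - x)^16 +
    1597789903417000000000000000000000000000000000000000000000/3218247165847493042444397662246541308445637363972369 * (x - 0)^4 * (727/1000 - x)^15 +
    5858028385120431000000000000000000000000000000000000000000/3218247165847493042444397662246541308445637363972369 * (x - 0)^5 * (727/1000 - x)^14 +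
    15878989560394142884000000000000000000000000000000000000000/3218247165847493042444397662246541308445637363972369 * (x - 0)^6 * (727/1000 - x)^13 +
    32911626512063368449558000000000000000000000000000000000000/3218247165847493042444397662246541308445637363972369 * (x - 0)^7 * (727/1000 - x)^12 +
    53200411728523669751992728000000000000000000000000000000000/3218247165847493042444397662246541308445637363972369 * (x - 0)^8 * (727/1000 - x)^11 +
    67797920549423220203366475190000000000000000000000000000000/3218247165847493042444397662246541308445637363972369 * (x - 0)^9 * (727/1000 - x)^10 +
    68406468251336986187677512958731000000000000000000000000000/3218247165847493042444397662246541308445637363972369 * (x - 0)^10 * (727/1000 - x)^9 +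
    54575667634445647134327890491632649000000000000000000000000/3218247165847493042444397662246541308445637363972369 * (x - 0)^11 * (727/1000 - x)^8 +
    34199123651409022203548067918035194823000000000000000000000/3218247165847493042444397662246541308445637363972369 * (x - 0)^12 * (727/1000 - x)^7 +
    16617598216538333726176445281784695604037000000000000000000/3218247165847493042444397662246541308445637363972369 * (x - 0)^13 * (727/1000 - x)^6 +
    6132062045630364127191892023291426341222000000000000000000/3218247165847493042444397662246541308445637363972369 * (x - 0)^14 * (727/1000 - x)^5 +
    1663416101243703543911303322153365192117331618000000000000/3218247165847493042444397662246541308445637363972369 * (x - 0)^15 * (727/1000 - x)^4 +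
    315105171470463464460503358185634631989326472000000000000/3218247165847493042444397662246541308445637363972369 * (x - 0)^16 * (727/1000 - x)^3 +
    38308714306227175225331050213274719930594572540156000000/3218247165847493042444397662246541308445637363972369 * (x - 0)^17 * (727/1000 - x)^2 +
    2555541712754232047833486230413544383327885210485353000/3218247165847493042444397662246541308445637363972369 * (x - 0)^18 * (727/1000 - x)^1 +
    63511494969160832219741882671564133653503582421270107/3218247165847493042444397662246541308445637363972369 * (x - 0)^19 * (727/1000 - x)^0 := by ring
  rw [h]; positivity

lemma cR4 (x : ℝ) (h0 : 0 ≤ x) (h1 : x ≤ 8/25) : 0 ≤ 13/5*(1-(1 + (-(2*x)) + (-(2*x))^2/2 + (-(2*x))^3/6 + (-(2*x))^4/24)) - 2*x*(1-74/1000) - x*(1+x^4/100)*(13/5-2*x) := by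
  have h0 : 0 ≤ x - 0 := by linarith
  have h1 : 0 ≤ 8/25 - x := by linarith
  have h : 13/5*(1-(1 + (-(2*x)) + (-(2*x))^2/2 + (-(2*x))^3/6 + (-(2*x))^4/24)) - 2*x*(1-74/1000) - x*(1+x^4/100)*(13/5-2*x) =
    14609375/65536 * (x - 0)^1 * (8/25 - x)^5 +
    53046875/65536 * (x - 0)^2 * (8/25 - x)^4 +
    109540625/98304 * (x - 0)^3 * (8/25 - x)^3 +
    68676625/98304 * (x - 0)^4 * (8/25 - x)^2 +
    174343253/983040 * (x - 0)^5 * (8/25 - x)^1 +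
    10734023/1638400 * (x - 0)^6 * (8/25 - x)^0 := by ring
  rw [h]; positivity

lemma c23 (x : ℝ) (h0 : 0 < x) (h1 : x < 1) : 0 < (1 - 3*x^2 + 2*x^3)*(1-x^12) - (1-x)*((1-x)*(1-x+x^2)*(1+x+x^2)*(1+x^2)*(1-x^2+x^4)) - 6*(1-x)^2*x^3*(1-x^2+x^4) + 2*((1-x^3)*(1+x^6)) - 2*((1-x^2)*(1+x^4+x^8)) + 2*(1-x^3)^2*x^9 - 3*(1-x^2)^2*x^10 := by
  have h0 : 0 < x - 0 := by linarith
  have h1 : 0 < 1 - x := by linarith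
  have h : (1 - 3*x^2 + 2*x^3)*(1-x^12) - (1-x)*((1-x)*(1-x+x^2)*(1+x+x^2)*(1+x^2)*(1-x^2+x^4)) - 6*(1-x)^2*x^3*(1-x^2+x^4) + 2*((1-x^3)*(1+x^6)) - 2*((1-x^2)*(1+x^4+x^8)) + 2*(1-x^3)^2*x^9 - 3*(1-x^2)^2*x^10 =
    2 * (x - 0)^1 * (1 - x)^10 +
    17 * (x - 0)^2 * (1 - x)^9 +
    59 * (x - 0)^3 * (1 - x)^8 +
    108 * (x - 0)^4 * (1 - x)^7 +
    114 * (x - 0)^5 * (1 - x)^6 +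
    72 * (x - 0)^6 * (1 - x)^5 +
    24 * (x - 0)^7 * (1 - x)^4 := by ring
  rw [h]; positivity


lemma clow {a b t : ℝ} (ht : 0 < t) (ha : 0 < a) (hab : a < b) :
    a * b * (b - a) * t ^ 2 ≤ a * (Real.exp (b * t) + Real.exp (-(b * t)) - 2)
      - b * (Real.exp (a * t) + Real.exp (-(a * t)) - 2) := by
  have d1 : ∀ u : ℝ, HasDerivAt (fun u : ℝ => Real.exp u + Real.exp (-u) - 2 - u ^ 2)
      (Real.exp u - Real.exp (-u) - 2 * u) u := by
    intro u
    have := (((Real.hasDerivAt_exp u).add (hasDerivAt_neg u).exp).sub_const 2).sub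
      ((hasDerivAt_id u).pow 2)
    refine HasDerivAt.congr_deriv this ?_
    simp only [id]; norm_num; ring
  have d2 : ∀ u : ℝ, HasDerivAt (fun u : ℝ => Real.exp u - Real.exp (-u) - 2 * u)
      (Real.exp u + Real.exp (-u) - 2) u := by
    intro u
    have := ((Real.hasDerivAt_exp u).sub (hasDerivAt_neg u).exp).sub ((hasDerivAt_id u).const_mul 2)
    refine HasDerivAt.congr_deriv this ?_
    ring
  have hc : ConvexOn ℝ univ (fun u : ℝ => Real.exp u + Real.exp (-u) - 2 - u ^ 2) := by
    apply convexOn_of_hasDerivWithinAt2_nonneg convex_univ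
      (f' := fun u => Real.exp u - Real.exp (-u) - 2 * u)
      (f'' := fun u => Real.exp u + Real.exp (-u) - 2)
    · exact fun u hu => (d1 u).continuousAt.continuousWithinAt
    · exact fun u _ => (d1 u).hasDerivWithinAt
    · exact fun u _ => (d2 u).hasDerivWithinAt
    · intro u _
      have h2 : Real.exp (-u) * Real.exp u = 1 := by rw [← Real.exp_add]; simp
      have := Real.exp_pos u
      have := Real.exp_pos (-u)
      nlinarith [sq_nonneg (Real.exp u - Real.exp (-u))]
  have hb : 0 < b := by linarith
  have h := hc.secant_mono (a := 0) (x := a * t) (y := b * t) (mem_univ _) (mem_univ _) (mem_univ _)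
    (by positivity) (by positivity) (mul_le_mul_of_nonneg_right hab.le ht.le)
  simp only [neg_zero, Real.exp_zero, sub_zero] at h
  rw [div_le_div_iff₀ (by positivity) (by positivity)] at h
  have h2 : t * (a * b * (b - a) * t ^ 2) ≤ t * (a * (Real.exp (b * t) + Real.exp (-(b * t)) - 2)
      - b * (Real.exp (a * t) + Real.exp (-(a * t)) - 2)) := by
    linarith
  exact le_of_mul_le_mul_left h2 ht

lemma dlow {a b t : ℝ} (ht : 0 < t) (hab : a < b) :
    (b - a) * t * (1 / (2 * Real.cosh (a * t / 2) * Real.cosh (b * t / 2))) <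
      2 / (1 + Real.exp (-(b * t))) - 2 / (1 + Real.exp (-(a * t))) := by
  have hu : 0 < (b - a) * t / 2 := by
    have := mul_pos (sub_pos.2 hab) ht
    linarith
  have h1 := Real.self_lt_sinh_iff.2 hu
  have e : 2 / (1 + Real.exp (-(b * t))) - 2 / (1 + Real.exp (-(a * t))) =
      2 * Real.sinh ((b - a) * t / 2) *
        (1 / (2 * Real.cosh (a * t / 2) * Real.cosh (b * t / 2))) := by
    rw [Real.sinh_eq, Real.cosh_eq, Real.cosh_eq]
    have ea : Real.exp (-(a * t)) = Real.exp (-(a * t / 2)) ^ 2 := by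
      rw [← Real.exp_nat_mul]; congr 1; push_cast; ring
    have eb : Real.exp (-(b * t)) = Real.exp (-(b * t / 2)) ^ 2 := by
      rw [← Real.exp_nat_mul]; congr 1; push_cast; ring
    have e1 : Real.exp ((b - a) * t / 2) = Real.exp (b * t / 2) * Real.exp (-(a * t / 2)) := by
      rw [← Real.exp_add]; congr 1; ring
    have e2 : Real.exp (-((b - a) * t / 2)) = Real.exp (-(b * t / 2)) * Real.exp ((a * t / 2)) := by
      rw [← Real.exp_add]; congr 1; ring
    rw [ea, eb, e1, e2, Real.exp_neg (a * t / 2), Real.exp_neg (b * t / 2)]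
    have := Real.exp_pos (a * t / 2)
    have := Real.exp_pos (b * t / 2)
    field_simp
    ring
  rw [e]
  have : 0 < 1 / (2 * Real.cosh (a * t / 2) * Real.cosh (b * t / 2)) := by
    have := Real.cosh_pos (a * t / 2)
    have := Real.cosh_pos (b * t / 2)
    positivity
  apply mul_lt_mul_of_pos_right _ this
  linarith

lemma tlo (n : ℕ) (hn : Even n) {v : ℝ} (hv : 0 ≤ v) :
    ∑ k ∈ Finset.range n, (-v) ^ k / (k.factorial : ℝ) ≤ Real.exp (-v) := by
  have := texp n v hv
  rw [hn.neg_one_pow] at this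
  linarith

lemma thi (n : ℕ) (hn : Odd n) {v : ℝ} (hv : 0 ≤ v) :
    Real.exp (-v) ≤ ∑ k ∈ Finset.range n, (-v) ^ k / (k.factorial : ℝ) := by
  have := texp n v hv
  rw [hn.neg_one_pow] at this
  linarith

lemma crhs {t : ℝ} (ht : 0 < t) (h : t ≤ 13 / 20) :
    (1 - Real.exp (-t)) / (1 + Real.exp (-t)) +
      (1 - Real.exp (-t)) ^ 2 / Real.exp (-t) * (1 / (2 * t)) ≤ t * (1 + t ^ 4 / 100) := by
  have h1 := tlo 6 (by decide) ht.le
  have h2 := cr t ht.le h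
  have h3 : 0 < 1 - t := by linarith
  have h4 := Real.add_one_le_exp (-t)
  have h5 : Real.exp (-t) < 1 := by simpa using ht
  norm_num [Finset.sum_range_succ, Nat.factorial] at h1 h2
  set L := 1 + -t + t ^ 2 / 2 + (-t) ^ 3 / 6 + t ^ 4 / 24 + (-t) ^ 5 / 120 with hL
  have hL0 : 0 < L := by
    have e : L = (1 - t) + t ^ 2 / 6 * (3 - t) + t ^ 4 / 120 * (5 - t) := by rw [hL]; ring
    have a1 : 0 < 3 - t := by linarith
    have a2 : 0 < 5 - t := by linarith
    rw [e]; positivity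
  have x0 := Real.exp_pos (-t)
  set X := Real.exp (-t)
  have i1 : (1 - X) / (1 + X) ≤ (1 - L) / (1 + L) := by
    rw [div_le_div_iff₀ (by positivity) (by positivity)]; nlinarith
  have i2 : (1 - X) ^ 2 / X ≤ (1 - L) ^ 2 / L := by
    apply div_le_div₀ (by positivity) _ hL0 h1
    apply pow_le_pow_left₀ (by linarith); linarith
  have i3 : (1 - X) ^ 2 / X * (1 / (2 * t)) ≤ (1 - L) ^ 2 / L * (1 / (2 * t)) :=
    mul_le_mul_of_nonneg_right i2 (by positivity)
  refine (add_le_add i1 i3).trans ?_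
  have e : (1 - L) / (1 + L) + (1 - L) ^ 2 / L * (1 / (2 * t)) =
    (2 * t * L * (1 - L) + (1 - L) ^ 2 * (1 + L)) / (2 * t * L * (1 + L)) := by
    field_simp
  rw [e, div_le_iff₀ (by positivity)]
  linarith

lemma glow {s : ℝ} (hs : 0 < s) (h : s ≤ 42 / 25) :
    1/2 - s/2 + s^2/6 - s^4/90 ≤ s / (Real.exp (2 * s) - 1) := by
  have h1 := tlo 12 (by decide) (show 0 ≤ 2 * s by positivity)
  have h2 := cg s hs.le h
  norm_num [Finset.sum_range_succ, Nat.factorial] at h1 h2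
  have hp : 0 < Real.exp (2 * s) - 1 := by
    have := Real.one_lt_exp_iff.2 (show 0 < 2 * s by positivity)
    linarith
  have hE : Real.exp (-(2 * s)) * Real.exp (2 * s) = 1 := by rw [← Real.exp_add]; simp
  have hE0 := Real.exp_pos (2 * s)
  have h3 : 0 ≤ s + (1/2 - s/2 + s^2/6 - s^4/90) := by
    have : s + (1/2 - s/2 + s^2/6 - s^4/90) = 1/2 + s/2 + s^2/90 * (15 - s^2) := by ring
    have : 0 ≤ 15 - s ^ 2 := by nlinarith
    have : 0 ≤ s^2/90 * (15 - s^2) := by positivity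
    linarith
  have h4 := mul_le_mul_of_nonneg_left h1 h3
  set q := 1/2 - s/2 + s^2/6 - s^4/90 with hq
  have h5 : 0 ≤ (s + q) * Real.exp (-(2 * s)) - q := by linarith
  rw [le_div_iff₀ hp]
  have h6 := mul_nonneg h5 hE0.le
  have : ((s + q) * Real.exp (-(2 * s)) - q) * Real.exp (2 * s) = s + q - q * Real.exp (2 * s) := by
    linear_combination (s + q) * hE
  linarith

lemma cosh_num : Real.cosh (13 / 20) * Real.cosh (13 / 10) ≤ 243 / 100 := by
  have h1 := tlo 8 (by decide) (show (0 : ℝ) ≤ 13 / 20 by norm_num)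
  have h2 := thi 9 (by decide) (show (0 : ℝ) ≤ 13 / 20 by norm_num)
  norm_num [Finset.sum_range_succ, Nat.factorial] at h1 h2
  have hq : Real.exp (-(13 / 20)) * Real.exp (13 / 20) = 1 := by rw [← Real.exp_add]; simp
  have hq0 := Real.exp_pos (13 / 20)
  have h3 : Real.exp (13 / 20) ≤ 19160 / 10000 := by nlinarith
  have h4 : Real.exp (-(13 / 20)) ≤ 5221 / 10000 := by linarith
  have hc : Real.cosh (13 / 20) ≤ 12191 / 10000 := by rw [Real.cosh_eq]; linarith
  have e : Real.cosh (13 / 10) = 2 * Real.cosh (13 / 20) ^ 2 - 1 := by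
    have := Real.cosh_two_mul (13 / 20)
    have h6 := Real.cosh_sq (13 / 20)
    rw [show (2 : ℝ) * (13 / 20) = 13 / 10 by norm_num] at this
    linarith
  have h1c := Real.one_le_cosh (13 / 20)
  have h7 : Real.cosh (13 / 10) ≤ 19725 / 10000 := by rw [e]; nlinarith
  have := mul_le_mul hc h7 (Real.cosh_pos _).le (by norm_num)
  linarith

lemma R1 {x : ℝ} (hx : 0 < x) (h : x ≤ 13 / 20) : 1 + x ^ 4 / 100 ≤
    (1 - Real.exp (-(2 * x))) ^ 2 / x + 1 / (2 * Real.cosh x * Real.cosh (2 * x)) +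
      8 * x / (Real.exp (2 * (8 * x)) - 1) := by
  have h1 := thi 7 (by decide) (show 0 ≤ 2 * x by positivity)
  have h2 := c1u x hx.le h
  have cp1 := Real.cosh_pos x
  have cp2 := Real.cosh_pos (2 * x)
  have hg : 0 < 8 * x / (Real.exp (2 * (8 * x)) - 1) := by
    have := Real.one_lt_exp_iff.2 (show 0 < 2 * (8 * x) by positivity)
    apply div_pos (by positivity); linarith
  have hd : 1 / 2 * Real.exp (-(5 * x ^ 2 / 2)) ≤ 1 / (2 * Real.cosh x * Real.cosh (2 * x)) := by
    have a1 := Real.cosh_le_exp_half_sq x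
    have a2 := Real.cosh_le_exp_half_sq (2 * x)
    have a3 := mul_le_mul a1 a2 cp2.le (Real.exp_pos _).le
    rw [← Real.exp_add] at a3
    have e : x ^ 2 / 2 + (2 * x) ^ 2 / 2 = 5 * x ^ 2 / 2 := by ring
    rw [e] at a3
    rw [Real.exp_neg, ← one_div, mul_assoc, ← one_div_mul_one_div]
    apply mul_le_mul_of_nonneg_left _ (by norm_num)
    exact one_div_le_one_div_of_le (by positivity) a3
  rcases le_total x (3 / 5) with h35 | h35
  · rcases le_total x (21 / 100) with h21 | h21
    · have c := c1a x hx.le h21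
      have g := glow (show 0 < 8 * x by positivity) (by linarith)
      have w := tlo 4 (by decide) (show 0 ≤ 5 * x ^ 2 / 2 by positivity)
      norm_num [Finset.sum_range_succ, Nat.factorial] at h1 h2 c w
      have hsq := pow_le_pow_left₀ (sub_nonneg.2 h2) (sub_le_sub_left h1 1) 2
      have : 1 + x ^ 4 / 100 - 1 / (2 * Real.cosh x * Real.cosh (2 * x)) -
        8 * x / (Real.exp (2 * (8 * x)) - 1) ≤ (1 - Real.exp (-(2 * x))) ^ 2 / x := by
        rw [le_div_iff₀ hx]
        refine le_trans ?_ hsq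
        refine le_trans (mul_le_mul_of_nonneg_right (show _ ≤ 1 + x ^ 4 / 100 - 1 / 2 *
          (1 + -(5 * x ^ 2 / 2) + (5 * x ^ 2 / 2) ^ 2 / 2 + (-(5 * x ^ 2 / 2)) ^ 3 / 6) -
          (1/2 - 8*x/2 + (8*x)^2/6 - (8*x)^4/90) by linarith) hx.le) ?_
        linarith
      linarith
    · have c := c1b x h21 h35
      have w := tlo 6 (by decide) (show 0 ≤ 5 * x ^ 2 / 2 by positivity)
      norm_num [Finset.sum_range_succ, Nat.factorial] at h1 h2 c w
      have hsq := pow_le_pow_left₀ (sub_nonneg.2 h2) (sub_le_sub_left h1 1) 2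
      have : 1 + x ^ 4 / 100 - 1 / (2 * Real.cosh x * Real.cosh (2 * x)) 
         ≤ (1 - Real.exp (-(2 * x))) ^ 2 / x := by
        rw [le_div_iff₀ hx]
        refine le_trans ?_ hsq
        refine le_trans (mul_le_mul_of_nonneg_right (show _ ≤ 1 + x ^ 4 / 100 - 1 / 2 *
          (1 + -(5 * x ^ 2 / 2) + (5 * x ^ 2 / 2) ^ 2 / 2 + (-(5 * x ^ 2 / 2)) ^ 3 / 6
           + (5 * x ^ 2 / 2) ^ 4 / 24 + (-(5 * x ^ 2 / 2)) ^ 5 / 120) by linarith) hx.le) ?_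
        linarith
      linarith
  · have c := c1c x h35 h
    norm_num [Finset.sum_range_succ, Nat.factorial] at h1 h2 c
    have hsq := pow_le_pow_left₀ (sub_nonneg.2 h2) (sub_le_sub_left h1 1) 2
    have i1 : 4 / 5 ≤ (1 - Real.exp (-(2 * x))) ^ 2 / x := by
      rw [le_div_iff₀ hx]; linarith
    have i2 : 100 / 486 ≤ 1 / (2 * Real.cosh x * Real.cosh (2 * x)) := by
      rw [div_le_div_iff₀ (by norm_num) (by positivity)]
      have b1 : Real.cosh x ≤ Real.cosh (13 / 20) := by
        rw [Real.cosh_le_cosh, abs_of_pos hx, abs_of_pos (by norm_num)]; exact h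
      have b2 : Real.cosh (2 * x) ≤ Real.cosh (13 / 10) := by
        rw [Real.cosh_le_cosh, abs_of_pos (by positivity), abs_of_pos (by norm_num)]; linarith
      have := mul_le_mul b1 b2 cp2.le (Real.cosh_pos _).le
      have := cosh_num
      linarith
    have i3 : x ^ 4 ≤ (13 / 20) ^ 4 := pow_le_pow_left₀ hx.le h 4
    norm_num at i3
    linarith

/-- the part of the difference without the last two terms, per unit of b - a -/
noncomputable def FF (a b t : ℝ) : ℝ :=
  AA a b t - (1 - Real.exp (-t)) / (1 + Real.exp (-t)) -
    (1 - Real.exp (-t)) ^ 2 / Real.exp (-t) * SS a b t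

lemma FF_mono {a0 b0 a b t : ℝ} (ht : 0 < t) (h0 : 0 < a0)
    (h1 : a0 < b0) (h2 : a0 ≤ a) (h3 : b0 ≤ b) (h4 : a < b) : FF a0 b0 t ≤ FF a b t := by
  unfold FF
  have i1 := AA_mono t h0 h1 h2 h3 h4
  have i2 := SS_mono ht h0 h1 h2 h3 h4
  have : 0 ≤ (1 - Real.exp (-t)) ^ 2 / Real.exp (-t) := by positivity
  have := mul_le_mul_of_nonneg_left i2 this
  linarith

lemma FF_ge {a b t : ℝ} (ht : 0 < t) (h : t ≤ 13 / 20) (ha : 0 < a) (hab : a < b) :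
    AA a b t - t * (1 + t ^ 4 / 100) ≤ FF a b t := by
  unfold FF
  have i1 := crhs ht h
  have i2 := SS_le ht ha hab
  have : 0 ≤ (1 - Real.exp (-t)) ^ 2 / Real.exp (-t) := by positivity
  have := mul_le_mul_of_nonneg_left i2 this
  linarith

lemma en (n : ℕ) (t : ℝ) : Real.exp (-((n : ℝ) * t)) = Real.exp (-t) ^ n := by
  rw [← Real.exp_nat_mul]; congr 1; ring

lemma en2 (n : ℕ) (t : ℝ) : Real.exp (2 * t * (n : ℝ)) = 1 / Real.exp (-t) ^ (2 * n) := by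
  rw [← Real.exp_nat_mul, one_div, ← Real.exp_neg]; congr 1; push_cast; ring

lemma FF24 {t : ℝ} (ht : 12 / 25 ≤ t) : 0 ≤ FF 2 4 t := by
  have h1 : Real.exp (-t) ≤ 31 / 50 := by
    have h1 := thi 5 (by decide) (show (0 : ℝ) ≤ 12 / 25 by norm_num)
    norm_num [Finset.sum_range_succ, Nat.factorial] at h1
    have : Real.exp (-t) ≤ Real.exp (-(12 / 25)) := Real.exp_le_exp.2 (by linarith)
    linarith
  have c := c24 _ (Real.exp_pos (-t)).le h1
  have ea := en 2 t
  have eb := en 4 t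
  have fa := en2 2 t
  have fb := en2 4 t
  push_cast at ea eb fa fb
  unfold FF AA SS
  rw [ea, eb, fa, fb]
  have x0 := Real.exp_pos (-t)
  set x := Real.exp (-t)
  have hx1 : x < 1 := by linarith
  have p4 : 0 < 1 - x ^ 4 := sub_pos.2 (pow_lt_one₀ x0.le hx1 (by norm_num))
  have p8 : 0 < 1 - x ^ 8 := sub_pos.2 (pow_lt_one₀ x0.le hx1 (by norm_num))
  have key : (4 * (1 - x ^ 2) - 2 * (1 - x ^ 4)) / (4 - 2) - (1 - x) / (1 + x) -
      (1 - x) ^ 2 / x * (2 * 4 * (1 / (1 / x ^ (2 * 2) - 1) - 1 / (1 / x ^ (2 * 4) - 1)) / (4 - 2))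
      = ((1-2*x^2+x^4)*(1+x)*(1-x^8) - (1-x)*(1-x^8) - 4*(1-x)^2*x^3*(1+x)) /
        ((1 + x) * (1 - x ^ 8)) := by
    have e4 : 1 / (1 / x ^ (2 * 2) - 1) = x ^ 4 * (1 + x ^ 4) / (1 - x ^ 8) := by
      rw [show 1 / x ^ (2 * 2) - 1 = (1 - x ^ 4) / x ^ 4 by field_simp,
        show 1 - x ^ 8 = (1 - x ^ 4) * (1 + x ^ 4) by ring]
      field_simp
    have e8 : 1 / (1 / x ^ (2 * 4) - 1) = x ^ 8 / (1 - x ^ 8) := by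
      rw [show 1 / x ^ (2 * 4) - 1 = (1 - x ^ 8) / x ^ 8 by field_simp]
      field_simp
    rw [e4, e8]
    field_simp
    ring
  rw [key]
  positivity

lemma x727 {t : ℝ} (ht : 8 / 25 ≤ t) : Real.exp (-t) ≤ 727 / 1000 := by
  have h1 := thi 7 (by decide) (show (0 : ℝ) ≤ 8 / 25 by norm_num)
  norm_num [Finset.sum_range_succ, Nat.factorial] at h1
  have : Real.exp (-t) ≤ Real.exp (-(8 / 25)) := Real.exp_le_exp.2 (by linarith)
  linarith

lemma FF26 {t : ℝ} (ht : 8 / 25 ≤ t) : 0 ≤ FF 2 6 t := by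
  have h1 := x727 ht
  have c := c26 _ (Real.exp_pos (-t)).le h1
  have ea := en 2 t
  have eb := en 6 t
  have fa := en2 2 t
  have fb := en2 6 t
  push_cast at ea eb fa fb
  unfold FF AA SS
  rw [ea, eb, fa, fb]
  have x0 := Real.exp_pos (-t)
  set x := Real.exp (-t)
  have hx1 : x < 1 := by linarith
  have p4 : 0 < 1 - x ^ 4 := sub_pos.2 (pow_lt_one₀ x0.le hx1 (by norm_num))
  have p8 : 0 < 1 - x ^ 12 := sub_pos.2 (pow_lt_one₀ x0.le hx1 (by norm_num))
  have key : (6 * (1 - x ^ 2) - 2 * (1 - x ^ 6)) / (6 - 2) - (1 - x) / (1 + x) -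
      (1 - x) ^ 2 / x * (2 * 6 * (1 / (1 / x ^ (2 * 2) - 1) - 1 / (1 / x ^ (2 * 6) - 1)) / (6 - 2))
      = ((1-3/2*x^2+1/2*x^6)*(1+x)*(1-x^12) - (1-x)*(1-x^12) - 3*(1-x)^2*x^3*(1+x^4)*(1+x)) /
        ((1 + x) * (1 - x ^ 12)) := by
    have e4 : 1 / (1 / x ^ (2 * 2) - 1) = x ^ 4 * (1 + x ^ 4 + x ^ 8) / (1 - x ^ 12) := by
      rw [show 1 / x ^ (2 * 2) - 1 = (1 - x ^ 4) / x ^ 4 by field_simp,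
        show 1 - x ^ 12 = (1 - x ^ 4) * (1 + x ^ 4 + x ^ 8) by ring]
      field_simp
    have e8 : 1 / (1 / x ^ (2 * 6) - 1) = x ^ 12 / (1 - x ^ 12) := by
      rw [show 1 / x ^ (2 * 6) - 1 = (1 - x ^ 12) / x ^ 12 by field_simp]
      field_simp
    rw [e4, e8]
    field_simp
    ring
  rw [key]
  positivity

lemma FF34 {t : ℝ} (ht : 8 / 25 ≤ t) : 0 ≤ FF 3 4 t := by
  have h1 := x727 ht
  have c := c34 _ (Real.exp_pos (-t)).le h1
  have ea := en 3 t
  have eb := en 4 t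
  have fa := en2 3 t
  have fb := en2 4 t
  push_cast at ea eb fa fb
  unfold FF AA SS
  rw [ea, eb, fa, fb]
  have x0 := Real.exp_pos (-t)
  set x := Real.exp (-t)
  have hx1 : x < 1 := by linarith
  have p4 : 0 < 1 - x ^ 6 := sub_pos.2 (pow_lt_one₀ x0.le hx1 (by norm_num))
  have p8 : 0 < 1 - x ^ 8 := sub_pos.2 (pow_lt_one₀ x0.le hx1 (by norm_num))
  have key : (4 * (1 - x ^ 3) - 3 * (1 - x ^ 4)) / (4 - 3) - (1 - x) / (1 + x) -
      (1 - x) ^ 2 / x * (3 * 4 * (1 / (1 / x ^ (2 * 3) - 1) - 1 / (1 / x ^ (2 * 4) - 1)) / (4 - 3))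
      = ((1-4*x^3+3*x^4)*(1+x)*(1-x^6)*(1-x^8) - (1-x)*(1-x^6)*(1-x^8)
          - 12*(1-x)^2*x^5*(1-x^2)*(1+x)) / ((1 + x) * (1 - x ^ 6) * (1 - x ^ 8)) := by
    have e4 : 1 / (1 / x ^ (2 * 3) - 1) = x ^ 6 / (1 - x ^ 6) := by
      rw [show 1 / x ^ (2 * 3) - 1 = (1 - x ^ 6) / x ^ 6 by field_simp]
      field_simp
    have e8 : 1 / (1 / x ^ (2 * 4) - 1) = x ^ 8 / (1 - x ^ 8) := by
      rw [show 1 / x ^ (2 * 4) - 1 = (1 - x ^ 8) / x ^ 8 by field_simp]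
      field_simp
    rw [e4, e8]
    field_simp
    ring
  rw [key]
  positivity

lemma R4 {b t : ℝ} (ht : 0 < t) (h : t ≤ 8 / 25) (hs : 26 / 5 ≤ 2 * b * t) : 0 ≤ FF 2 b t := by
  have hb' : 13 / 5 / t ≤ b := by rw [div_le_iff₀ ht]; linarith
  have hb2 : 2 < 13 / 5 / t := by rw [lt_div_iff₀ ht]; linarith
  have i1 := AA_mono t (by norm_num) hb2 le_rfl hb' (hb2.trans_le hb')
  have i2 := FF_ge (b := b) ht (by linarith) (show (0 : ℝ) < 2 by norm_num) (hb2.trans_le hb')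
  have c := cR4 t ht.le h
  have h1 := thi 5 (by decide) (show 0 ≤ 2 * t by positivity)
  have h2 := tlo 12 (by decide) (show (0 : ℝ) ≤ 13 / 5 by norm_num)
  norm_num [Finset.sum_range_succ, Nat.factorial] at h1 h2 c
  have h3 : 74 / 1000 ≤ Real.exp (-(13 / 5)) := by linarith
  have i3 : t * (1 + t ^ 4 / 100) ≤ AA 2 (13 / 5 / t) t := by
    unfold AA
    rw [div_mul_cancel₀ _ ht.ne']
    have hp : 0 < 13 / 5 - 2 * t := by linarith
    have e : (13 / 5 / t * (1 - Real.exp (-(2 * t))) - 2 * (1 - Real.exp (-(13 / 5)))) /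
        (13 / 5 / t - 2) = (13 / 5 * (1 - Real.exp (-(2 * t))) - 2 * t * (1 - Real.exp (-(13 / 5)))) /
        (13 / 5 - 2 * t) := by
      have : 13 / 5 / t - 2 ≠ 0 := by linarith
      rw [div_eq_div_iff this hp.ne']
      field_simp
    rw [e, le_div_iff₀ hp]
    have := mul_le_mul_of_nonneg_left h3 ht.le
    linarith
  linarith

lemma R6 {a b t : ℝ} (ht : 0 < t) (h : t ≤ 8 / 25) (ha : 3 ≤ a) (hab : a + 1 ≤ b)
    (hs : 26 / 5 ≤ a * b * t) : 0 ≤ FF a b t := by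
  have hc : ContinuousOn (fun θ : ℝ => (3 + θ * (a - 3)) * (4 + θ * (b - 4)) * t) (Icc 0 1) := by
    fun_prop
  have hm : (26 / 5 : ℝ) ∈ Icc ((3 + 0 * (a - 3)) * (4 + 0 * (b - 4)) * t)
      ((3 + 1 * (a - 3)) * (4 + 1 * (b - 4)) * t) := by
    constructor
    · linarith
    · calc (26 / 5 : ℝ) ≤ a * b * t := hs
        _ = _ := by ring
  obtain ⟨θ, ⟨h0, h1⟩, hθ⟩ := intermediate_value_Icc (zero_le_one) hc hm
  simp only at hθ
  have k1 : 0 ≤ θ * (a - 3) := mul_nonneg h0 (by linarith)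
  have k2 : 0 ≤ θ * (b - 4) := mul_nonneg h0 (by linarith)
  have k3 : θ * (a - 3) ≤ 1 * (a - 3) := mul_le_mul_of_nonneg_right h1 (by linarith)
  have k4 : θ * (b - 4) ≤ 1 * (b - 4) := mul_le_mul_of_nonneg_right h1 (by linarith)
  have k5 : θ * (a - 3) ≤ θ * (b - 4) := mul_le_mul_of_nonneg_left (by linarith) h0
  set a' := 3 + θ * (a - 3)
  set b' := 4 + θ * (b - 4)
  have i1 := AA_mono (a0 := a') (b0 := b') (a := a) (b := b) t (by linarith) (by linarith)
    (by linarith) (by linarith) (by linarith)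
  have i2 := FF_ge (a := a) (b := b) ht (by linarith) (by linarith) (by linarith)
  have i3 := AA_s (a0 := 3) (b0 := 4) (a := a') (b := b') (t := t) (τ := 13 / 30) ht (by norm_num)
    (by norm_num) (by linarith) (by linarith) (by linarith) (by rw [hθ]; norm_num)
  have i4 : 101 / 100 ≤ AA 3 4 (13 / 30) / (13 / 30) := by
    have h1 := thi 9 (by decide) (show (0 : ℝ) ≤ 13 / 10 by norm_num)
    have h2 := tlo 10 (by decide) (show (0 : ℝ) ≤ 26 / 15 by norm_num)
    norm_num [Finset.sum_range_succ, Nat.factorial] at h1 h2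
    unfold AA
    norm_num
    linarith
  have i5 := i4.trans i3
  rw [le_div_iff₀ ht] at i5
  have i6 : t ^ 4 ≤ 1 := pow_le_one₀ ht.le (by linarith)
  have : t * t ^ 4 ≤ t * 1 := mul_le_mul_of_nonneg_left i6 ht.le
  linarith

lemma core (m n : ℕ) (hm : 2 ≤ m) (hmn : m < n) (hn : 4 ≤ n) {t : ℝ} (ht : 0 < t) :
    0 < ((n : ℝ) - m) * FF m n t + (2 / (1 + Real.exp (-(n * t))) - 2 / (1 + Real.exp (-(m * t))))
      + (m * (Real.exp (n * t) + Real.exp (-(n * t)) - 2)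
      - n * (Real.exp (m * t) + Real.exp (-(m * t)) - 2)) * (1 / (Real.exp (2 * (m * n * t)) - 1)) := by
  have ha : (2 : ℝ) ≤ m := by exact_mod_cast hm
  have hab' : (m : ℝ) + 1 ≤ n := by exact_mod_cast hmn
  have hb : (4 : ℝ) ≤ n := by exact_mod_cast hn
  have hab : (m : ℝ) < n := by linarith
  have ha0 : (0 : ℝ) < m := by linarith
  have hb0 : (0 : ℝ) < n := by linarith
  have hL := clow ht ha0 hab
  have hD := dlow ht hab
  have hf : 0 < 1 / (Real.exp (2 * (m * n * t)) - 1) := by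
    have := Real.one_lt_exp_iff.2 (show 0 < 2 * (m * n * t) by positivity)
    apply div_pos one_pos; linarith
  have hL2 := mul_le_mul_of_nonneg_right hL hf.le
  have hba : (0 : ℝ) < n - m := by linarith
  have hch : 0 < 1 / (2 * Real.cosh (m * t / 2) * Real.cosh (n * t / 2)) := by
    have := Real.cosh_pos (m * t / 2)
    have := Real.cosh_pos (n * t / 2)
    positivity
  have fin : 0 ≤ FF m n t → 0 < ((n : ℝ) - m) * FF m n t +
      (2 / (1 + Real.exp (-(n * t))) - 2 / (1 + Real.exp (-(m * t))))
      + (m * (Real.exp (n * t) + Real.exp (-(n * t)) - 2)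
      - n * (Real.exp (m * t) + Real.exp (-(m * t)) - 2)) *
        (1 / (Real.exp (2 * (m * n * t)) - 1)) := by
    intro h
    have i1 := mul_nonneg hba.le h
    have i2 : 0 < ((n : ℝ) - m) * t *
      (1 / (2 * Real.cosh (m * t / 2) * Real.cosh (n * t / 2))) := by positivity
    have i3 : 0 < (m : ℝ) * n * (n - m) * t ^ 2 * (1 / (Real.exp (2 * (m * n * t)) - 1)) := by
      positivity
    linarith
  rcases le_total ((m : ℝ) * n * t) (26 / 5) with hs | hs
  · -- small s
    clear fin
    have h8 : (8 : ℝ) ≤ m * n := by nlinarith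
    have ht8 : 8 * t ≤ m * n * t := mul_le_mul_of_nonneg_right h8 ht.le
    set τ := (m : ℝ) * n * t / 8 with hτ
    have hs8 : (m : ℝ) * n * t = 8 * τ := by rw [hτ]; ring
    have hτ0 : 0 < τ := by positivity
    have r := R1 hτ0 (by linarith)
    have i1 := FF_ge ht (by linarith) ha0 hab
    have i2 := AA_s (a0 := 2) (b0 := 4) ht (by norm_num) (by norm_num) ha hb hab (τ := τ)
      (by rw [hs8]; ring)
    have e2 : AA 2 4 τ = (1 - Real.exp (-(2 * τ))) ^ 2 := by
      unfold AA
      have : Real.exp (-(4 * τ)) = Real.exp (-(2 * τ)) ^ 2 := by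
        rw [← Real.exp_nat_mul]; congr 1; push_cast; ring
      rw [this]; ring
    rw [e2] at i2
    have i3 : 1 / (2 * Real.cosh τ * Real.cosh (2 * τ)) ≤
        1 / (2 * Real.cosh (m * t / 2) * Real.cosh (n * t / 2)) := by
      have p1 := Real.cosh_pos (m * t / 2)
      have p2 := Real.cosh_pos (n * t / 2)
      have q1 : (m : ℝ) * t / 2 ≤ τ := by
        have : (m : ℝ) * t * 4 ≤ m * t * n := mul_le_mul_of_nonneg_left hb (by positivity)
        linarith
      have q2 : (n : ℝ) * t / 2 ≤ 2 * τ := by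
        have : (n : ℝ) * t * 2 ≤ n * t * m := mul_le_mul_of_nonneg_left ha (by positivity)
        linarith
      have b1 : Real.cosh (m * t / 2) ≤ Real.cosh τ := by
        rw [Real.cosh_le_cosh, abs_of_pos (by positivity), abs_of_pos (by positivity)]; exact q1
      have b2 : Real.cosh (n * t / 2) ≤ Real.cosh (2 * τ) := by
        rw [Real.cosh_le_cosh, abs_of_pos (by positivity), abs_of_pos (by positivity)]; exact q2
      apply one_div_le_one_div_of_le (by positivity)
      have := mul_le_mul b1 b2 p2.le (Real.cosh_pos _).le
      linarith
    have i4 : t ^ 4 ≤ τ ^ 4 := pow_le_pow_left₀ ht.le (by linarith) 4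
    rw [hs8] at hL2 ⊢
    set W := 1 / (2 * Real.cosh (m * t / 2) * Real.cosh (n * t / 2))
    set g := 1 / (Real.exp (2 * (8 * τ)) - 1)
    have e3 : 8 * τ / (Real.exp (2 * (8 * τ)) - 1) = 8 * τ * g := by
      rw [div_eq_mul_one_div]
    rw [e3] at r
    have i5 : 0 ≤ AA m n t / t - 1 - t ^ 4 / 100 + W + 8 * τ * g := by linarith
    have i6 := mul_nonneg (mul_pos hba ht).le i5
    have e4 : ((n : ℝ) - m) * t * (AA m n t / t - 1 - t ^ 4 / 100 + W + 8 * τ * g) =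
      ((n : ℝ) - m) * (AA m n t - t * (1 + t ^ 4 / 100)) + ((n : ℝ) - m) * t * W +
        (m : ℝ) * n * (n - m) * t ^ 2 * g := by
      rw [← hs8]
      field_simp
      ring
    have i7 := mul_le_mul_of_nonneg_left i1 hba.le
    linarith
  · apply fin
    rcases le_total (12 / 25) t with h1 | h1
    · exact (FF24 h1).trans (FF_mono ht (by norm_num) (by norm_num) ha hb hab)
    · rcases Nat.lt_or_ge m 3 with h3 | h3
      · have hm2 : m = 2 := by omega
        subst hm2
        rcases le_total (8 / 25) t with h2 | h2
        · have h6 : (6 : ℝ) ≤ n := by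
            by_contra hc
            push Not at hc
            have : n < 6 := by exact_mod_cast hc
            have : (n : ℝ) ≤ 5 := by exact_mod_cast (show n ≤ 5 by omega)
            push_cast at hs
            nlinarith
          push_cast at ha hab ⊢
          exact (FF26 h2).trans (FF_mono ht (by norm_num) (by norm_num) le_rfl h6 hab)
        · push_cast at hs ⊢
          exact R4 ht h2 hs
      · have h3' : (3 : ℝ) ≤ m := by exact_mod_cast h3
        rcases le_total (8 / 25) t with h2 | h2
        · exact (FF34 h2).trans (FF_mono ht (by norm_num) (by norm_num) h3' hb hab)
        · exact R6 ht h2 h3' hab' hs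

lemma lamrho (N : ℕ) (hN : 1 ≤ N) {x : ℝ} (h0 : 0 < x) (h1 : x < 1) :
    lam N (1 - x) * rho N (1 - x) =
      (1 - x) / (1 + x) + N * ((1 - x) ^ 2 / x) * ((x ^ N) ^ 2 / (1 - (x ^ N) ^ 2)) := by
  unfold lam rho Pud Pdd
  have e : x ^ (N - 1) = x ^ N / x := by
    rw [eq_div_iff h0.ne', ← pow_succ, Nat.sub_add_cancel hN]
  have e2 : x ^ (2 * N) = (x ^ N) ^ 2 := by rw [mul_comm, pow_mul]
  rw [sub_sub_cancel, e, e2]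
  have hX1 : x ^ N < 1 := pow_lt_one₀ h0.le h1 (by omega)
  have hX0 : 0 < x ^ N := by positivity
  set X := x ^ N
  have p1 : 1 - X ≠ 0 := by linarith
  have p2 : 1 + X ≠ 0 := by linarith
  have p3 : 1 - x ≠ 0 := by linarith
  have p4 : 1 + x ≠ 0 := by linarith
  have q1 : 1 - X ^ 2 = (1 - X) * (1 + X) := by ring
  have q2 : 1 - x ^ 2 = (1 - x) * (1 + x) := by ring
  have q3 : 2 - (1 - X) = 1 + X := by ring
  rw [q1, q2, q3]
  field_simp
  ring

lemma lamrho2 (N M : ℕ) (hN : 1 ≤ N) (hM : 1 ≤ M) {x : ℝ} (h0 : 0 < x) (h1 : x < 1) :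
    lam N (rho M (1 - x)) * rho (N * M) (1 - x) =
      (1 - x ^ M) / (1 + x ^ M) +
        N * ((1 - x ^ M) ^ 2 / x ^ M) * ((x ^ (N * M)) ^ 2 / (1 - (x ^ (N * M)) ^ 2)) := by
  have h := lamrho N hN (x := x ^ M) (by positivity) (pow_lt_one₀ h0.le h1 (by omega))
  have e : rho M (1 - x) = 1 - x ^ M := by unfold rho; rw [sub_sub_cancel]
  have e2 : rho N (1 - x ^ M) = rho (N * M) (1 - x) := by
    unfold rho; rw [sub_sub_cancel, sub_sub_cancel, ← pow_mul, mul_comm]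
  rw [e2] at h
  rw [e, h, ← pow_mul x M N, mul_comm M N]

theorem reflected_gray_column_exchange_inequality (N2 N3 : ℕ) (h1 : 2 ≤ N2)
    (h23 : N2 < N3) (h30 : N3 ≤ 30) (p : ℝ) (hp0 : 0 < p) (hp1 : p < 1) :
    (1 - lam N3 p) * rho N3 p * (N2 : ℝ) - lam N2 (rho N3 p) * rho (N2 * N3) p
      < (1 - lam N2 p) * rho N2 p * (N3 : ℝ) - lam N3 (rho N2 p) * rho (N2 * N3) p := by
  obtain ⟨x, rfl⟩ : ∃ x, p = 1 - x := ⟨1 - p, by ring⟩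
  have x0 : 0 < x := by linarith
  have x1 : x < 1 := by linarith
  have r : ∀ M, rho M (1 - x) = 1 - x ^ M := by intro M; unfold rho; rw [sub_sub_cancel]
  have l3 := lamrho N3 (by omega) x0 x1
  have l2 := lamrho N2 (by omega) x0 x1
  have l23 := lamrho2 N2 N3 (by omega) (by omega) x0 x1
  have l32 := lamrho2 N3 N2 (by omega) (by omega) x0 x1
  rw [mul_comm N3 N2] at l32
  have g1 : (1 - lam N3 (1 - x)) * rho N3 (1 - x) * (N2 : ℝ) =
    (1 - x ^ N3) * N2 - lam N3 (1 - x) * rho N3 (1 - x) * N2 := by rw [r]; ring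
  have g2 : (1 - lam N2 (1 - x)) * rho N2 (1 - x) * (N3 : ℝ) =
    (1 - x ^ N2) * N3 - lam N2 (1 - x) * rho N2 (1 - x) * N3 := by rw [r]; ring
  rw [g1, g2, l3, l2, l23, l32]
  rcases Nat.lt_or_ge N3 4 with h4 | h4
  · have e3 : N3 = 3 := by omega
    have e2 : N2 = 2 := by omega
    subst e3 e2
    have c := c23 x x0 x1
    have p2 : 0 < 1 - x ^ 2 := sub_pos.2 (pow_lt_one₀ x0.le x1 (by norm_num))
    have p4 : 0 < 1 - x ^ 4 := sub_pos.2 (pow_lt_one₀ x0.le x1 (by norm_num))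
    have p6 : 0 < 1 - x ^ 6 := sub_pos.2 (pow_lt_one₀ x0.le x1 (by norm_num))
    have p12 : 0 < 1 - x ^ 12 := sub_pos.2 (pow_lt_one₀ x0.le x1 (by norm_num))
    have q1 : 1 / (1 + x) = ((1-x)*(1-x+x^2)*(1+x+x^2)*(1+x^2)*(1-x^2+x^4)) / (1 - x ^ 12) := by
      rw [div_eq_div_iff (by positivity) p12.ne']; ring
    have q2 : 1 / (1 + x ^ 2) = ((1-x^2)*(1+x^4+x^8)) / (1 - x ^ 12) := by
      rw [div_eq_div_iff (by positivity) p12.ne']; ring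
    have q3 : 1 / (1 + x ^ 3) = ((1-x^3)*(1+x^6)) / (1 - x ^ 12) := by
      rw [div_eq_div_iff (by positivity) p12.ne']; ring
    have q4 : 1 / (1 - (x ^ 2) ^ 2) = (1 + x ^ 4 + x ^ 8) / (1 - x ^ 12) := by
      rw [div_eq_div_iff (by rw [← pow_mul]; exact p4.ne') p12.ne']; ring
    have q6 : 1 / (1 - (x ^ 3) ^ 2) = (1 + x ^ 6) / (1 - x ^ 12) := by
      rw [div_eq_div_iff (by rw [← pow_mul]; exact p6.ne') p12.ne']; ring
    have q12 : 1 / (1 - (x ^ (2 * 3)) ^ 2) = 1 / (1 - x ^ 12) := by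
      rw [← pow_mul]
    have c' := div_pos c p12
    rw [← sub_pos]
    refine lt_of_lt_of_eq c' ?_
    rw [div_eq_mul_one_div (1 - x) (1 + x), div_eq_mul_one_div (1 - x ^ 2) (1 + x ^ 2),
      div_eq_mul_one_div (1 - x ^ 3) (1 + x ^ 3), div_eq_mul_one_div _ (1 - (x ^ 2) ^ 2),
      div_eq_mul_one_div _ (1 - (x ^ 3) ^ 2), div_eq_mul_one_div _ (1 - (x ^ (2 * 3)) ^ 2),
      q1, q2, q3, q4, q6, q12]
    push_cast
    field_simp
    ring
  · obtain ⟨t, rfl⟩ : ∃ t, x = Real.exp (-t) := ⟨-Real.log x, by rw [neg_neg, Real.exp_log x0]⟩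
    have ht : 0 < t := by simpa using x1
    have c := core N2 N3 h1 h23 h4 ht
    rw [← sub_pos]
    refine lt_of_lt_of_eq c ?_
    have f1 : ∀ n : ℕ, Real.exp ((n : ℝ) * t) = 1 / Real.exp (-t) ^ n := by
      intro n
      rw [← en, Real.exp_neg]; simp
    have f2 : Real.exp (2 * ((N2 : ℝ) * N3 * t)) = 1 / (Real.exp (-t) ^ (N2 * N3)) ^ 2 := by
      have := en2 (N2 * N3) t
      rw [mul_comm 2 (N2 * N3), pow_mul] at this
      rw [← this]; congr 1; push_cast; ring
    have f3 : ∀ n : ℕ, Real.exp (2 * t * (n : ℝ)) = 1 / (Real.exp (-t) ^ n) ^ 2 := by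
      intro n
      rw [en2, mul_comm 2 n, pow_mul]
    unfold FF AA SS
    rw [f2, f3, f3, f1, f1, en, en]
    have X1 : Real.exp (-t) ^ N2 < 1 := pow_lt_one₀ x0.le x1 (by omega)
    have Y1 : Real.exp (-t) ^ N3 < 1 := pow_lt_one₀ x0.le x1 (by omega)
    have Z1 : Real.exp (-t) ^ (N2 * N3) < 1 := pow_lt_one₀ x0.le x1 (by positivity)
    have X0 : 0 < Real.exp (-t) ^ N2 := by positivity
    have Y0 : 0 < Real.exp (-t) ^ N3 := by positivity
    have Z0 : 0 < Real.exp (-t) ^ (N2 * N3) := by positivity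
    set x := Real.exp (-t)
    set X := x ^ N2
    set Y := x ^ N3
    set Z := x ^ (N2 * N3)
    have hba : (N3 : ℝ) - N2 ≠ 0 := by
      have : (N2 : ℝ) < N3 := by exact_mod_cast h23
      linarith
    have inv : ∀ X : ℝ, 0 < X → X < 1 → 1 / (1 / X ^ 2 - 1) = X ^ 2 / (1 - X ^ 2) := by
      intro X h0 h1
      have : 0 < 1 - X ^ 2 := sub_pos.2 (pow_lt_one₀ h0.le h1 (by norm_num))
      rw [show 1 / X ^ 2 - 1 = (1 - X ^ 2) / X ^ 2 by field_simp]
      field_simp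
    rw [inv X X0 X1, inv Y Y0 Y1, inv Z Z0 Z1]
    have t1 : (1 - X) / (1 + X) = 2 / (1 + X) - 1 := by field_simp; ring
    have t2 : (1 - Y) / (1 + Y) = 2 / (1 + Y) - 1 := by field_simp; ring
    have s1 : (1 - X) ^ 2 / X = 1 / X + X - 2 := by field_simp; ring
    have s2 : (1 - Y) ^ 2 / Y = 1 / Y + Y - 2 := by field_simp; ring
    rw [t1, t2, s1, s2]
    generalize X ^ 2 / (1 - X ^ 2) = u
    generalize Y ^ 2 / (1 - Y ^ 2) = v
    generalize Z ^ 2 / (1 - Z ^ 2) = w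
    generalize (1 - x) ^ 2 / x = cc
    generalize (1 - x) / (1 + x) = th
    generalize 1 / X = iX
    generalize 1 / Y = iY
    generalize 2 / (1 + X) = jX
    generalize 2 / (1 + Y) = jY
    field_simp
    ring
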